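/- Let q* be a feasible charge vector that minimizes the cost ∑_{n=1}^m c_n q_n among all feasible charge vectors, with q*_n > 0 for every n ∈ {1,…,m}, and suppose c_n ≠ c_{n+1} for every n ∈ {1,…,m}. Then for every n ∈ {1,…,m}, the arrival battery level at node n+1 satisfies b_{n+1}(q*) ∈ {β_{n+1}, B_n − d_n}; in particular, along an optimal charging strategy the arrival battery level at each node can take only finitely many values. -/

import Mathlib

/-!
Exchange argument. If `b_{n+1}(q)` is neither `β_{n+1}` nor `B_n - d_n`, then both constraints
on the battery between stations `n` and `n + 1` are slack, and since `q_n, q_{n+1} > 0` a small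
amount `t` of charge, of either sign, can be moved from station `n + 1` to station `n`: only the
level `b_{n+1}` changes (`batt_shiftCharge`). The cost changes by `t * (c_n - c_{n+1})`
(`chargeCost_shiftCharge`), which is negative for a suitable sign of `t` because
`c_n ≠ c_{n+1}`, contradicting optimality. For `n = m` the same formulas hold: the coordinate
`q_{m+1}` enters no constraint and no cost, in accordance with `c_{m+1} = 0`.
-/

/-- Arrival battery level at node `i`: `b_i(q) = L + ∑_{k=1}^{i-1} q_k - ∑_{k=0}^{i-1} d_k`. -/
noncomputable def batt (L : ℝ) (d q : ℕ → ℝ) (i : ℕ) : ℝ :=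
  L + ∑ k ∈ Finset.Ico 1 i, q k - ∑ k ∈ Finset.range i, d k

/-- Feasibility of a charge vector for a single-path charging instance. -/
def FeasibleCharge (m : ℕ) (L : ℝ) (d β B q : ℕ → ℝ) : Prop :=
  (∀ n ∈ Finset.Icc 1 m, 0 ≤ q n) ∧
  (∀ i ∈ Finset.Icc 1 (m + 1), β i ≤ batt L d q i) ∧
  (∀ n ∈ Finset.Icc 1 m, batt L d q n + q n ≤ B n)

/-- Cost of a charge vector. -/
noncomputable def chargeCost (m : ℕ) (c q : ℕ → ℝ) : ℝ :=
  ∑ n ∈ Finset.Icc 1 m, c n * q n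

/-- The charge vector obtained from `q` by charging `t` more at station `n` and `t` less at
station `n + 1`. For `n = m` the second change affects an irrelevant coordinate. -/
noncomputable def shiftCharge (q : ℕ → ℝ) (n : ℕ) (t : ℝ) (k : ℕ) : ℝ :=
  q k + (if k = n then t else 0) - (if k = n + 1 then t else 0)

lemma batt_shiftCharge (L : ℝ) (d q : ℕ → ℝ) (n : ℕ) (hn : 1 ≤ n) (t : ℝ) (i : ℕ) :
    batt L d (shiftCharge q n t) i = batt L d q i + if i = n + 1 then t else 0 := by
  simp only [batt, shiftCharge, Finset.sum_sub_distrib, Finset.sum_add_distrib,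
    Finset.sum_ite_eq', Finset.mem_Ico]
  split_ifs <;> first | omega | ring

lemma batt_succ (L : ℝ) (d q : ℕ → ℝ) (n : ℕ) (hn : 1 ≤ n) :
    batt L d q (n + 1) = batt L d q n + q n - d n := by
  simp only [batt, Finset.sum_range_succ, Finset.sum_Ico_succ_top hn]
  ring

lemma chargeCost_shiftCharge (m : ℕ) (c q : ℕ → ℝ) (hcm : c (m + 1) = 0) (n : ℕ)
    (hn : n ∈ Finset.Icc 1 m) (t : ℝ) :
    chargeCost m c (shiftCharge q n t) = chargeCost m c q + t * (c n - c (n + 1)) := by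
  simp only [chargeCost, shiftCharge, mul_sub, mul_add, Finset.sum_sub_distrib,
    Finset.sum_add_distrib, mul_ite, mul_zero, Finset.sum_ite_eq', if_pos hn]
  rw [Finset.mem_Icc] at hn
  split_ifs with h
  · ring
  · have : n = m := by
      rw [Finset.mem_Icc] at h
      omega
    subst this
    rw [hcm]
    ring

/-- A shift by `t` keeps feasibility as long as `|t|` is at most the slack of each of the four
constraints it affects. -/
lemma feasible_shiftCharge (m : ℕ) (L : ℝ) (d β B q : ℕ → ℝ)
    (hfeas : FeasibleCharge m L d β B q) (n : ℕ) (hn : 1 ≤ n) (t : ℝ)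
    (h1 : |t| ≤ q n) (h2 : n + 1 ≤ m → |t| ≤ q (n + 1))
    (h3 : |t| ≤ batt L d q (n + 1) - β (n + 1))
    (h4 : |t| ≤ B n - (batt L d q n + q n)) :
    FeasibleCharge m L d β B (shiftCharge q n t) := by
  obtain ⟨hq, hb, hB⟩ := hfeas
  have ht := le_abs_self t
  have ht' := neg_abs_le t
  refine ⟨fun k hk => ?_, fun i hi => ?_, fun k hk => ?_⟩
  · have := hq k hk
    rw [Finset.mem_Icc] at hk
    unfold shiftCharge
    split_ifs with ha hb' hb'
    · omega
    · subst ha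
      linarith
    · subst hb'
      linarith [h2 hk.2]
    · linarith
  · have := hb i hi
    rw [batt_shiftCharge L d q n hn]
    split_ifs with ha
    · subst ha
      linarith
    · linarith
  · have := hB k hk
    rw [batt_shiftCharge L d q n hn]
    unfold shiftCharge
    split_ifs with ha hb' hb'
    · omega
    · linarith
    · subst hb'
      linarith
    · linarith

theorem optimal_arrival_levels_finite
    (m : ℕ) (hm : 1 ≤ m) (L : ℝ) (hL : 0 < L)
    (d c β B : ℕ → ℝ)
    (hd : ∀ n ≤ m, 0 ≤ d n)
    (hc : ∀ n ∈ Finset.Icc 1 m, 0 < c n)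
    (hthr : ∀ n ∈ Finset.Icc 1 m, 0 ≤ β n ∧ β n < B n ∧ B n ≤ L)
    (hβconv : β (m + 1) = 0) (hcconv : c (m + 1) = 0)
    (q : ℕ → ℝ)
    (hfeas : FeasibleCharge m L d β B q)
    (hopt : ∀ q', FeasibleCharge m L d β B q' → chargeCost m c q ≤ chargeCost m c q')
    (hpos : ∀ n ∈ Finset.Icc 1 m, 0 < q n)
    (hne : ∀ n ∈ Finset.Icc 1 m, c n ≠ c (n + 1)) :
    ∀ n ∈ Finset.Icc 1 m,
      batt L d q (n + 1) = β (n + 1) ∨ batt L d q (n + 1) = B n - d n := by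
  intro n hn
  by_contra! hcon
  obtain ⟨hβ, hB⟩ := hcon
  have hn' := Finset.mem_Icc.mp hn
  have hs := batt_succ L d q n hn'.1
  have h3 : 0 < batt L d q (n + 1) - β (n + 1) :=
    sub_pos.mpr (lt_of_le_of_ne
      (hfeas.2.1 (n + 1) (Finset.mem_Icc.mpr ⟨by omega, by omega⟩)) hβ.symm)
  have h4 : 0 < B n - (batt L d q n + q n) :=
    sub_pos.mpr (lt_of_le_of_ne (hfeas.2.2 n hn) fun h => hB (by linarith))
  -- Nothing is known about the unused coordinate `q (m + 1)`, hence the condition `n + 1 ≤ m`.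
  obtain ⟨r, hr, hrq⟩ : ∃ r : ℝ, 0 < r ∧ (n + 1 ≤ m → r ≤ q (n + 1)) := by
    by_cases h : n + 1 ≤ m
    · exact ⟨q (n + 1), hpos _ (Finset.mem_Icc.mpr ⟨by omega, h⟩), fun _ => le_rfl⟩
    · exact ⟨1, one_pos, fun h' => absurd h' h⟩
  obtain ⟨ε, hε, hεlt⟩ := exists_between (lt_min (lt_min (hpos n hn) hr) (lt_min h3 h4))
  simp only [lt_min_iff] at hεlt
  obtain ⟨⟨e1, e2⟩, e3, e4⟩ := hεlt
  have key : ∀ t : ℝ, |t| = ε → 0 ≤ t * (c n - c (n + 1)) := by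
    intro t ht
    have := hopt _ (feasible_shiftCharge m L d β B q hfeas n hn'.1 t (by linarith)
      (fun h => by linarith [hrq h]) (by linarith) (by linarith))
    rw [chargeCost_shiftCharge m c q hcconv n hn] at this
    linarith
  have k1 := key ε (abs_of_pos hε)
  have k2 := key (-ε) (by rw [abs_neg, abs_of_pos hε])
  have hzero : ε * (c n - c (n + 1)) = 0 := by linarith
  rcases mul_eq_zero.mp hzero with h | h
  · exact hε.ne' h
  · exact hne n hn (sub_eq_zero.mp h)
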